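/- For all integers n, l, i, j with 0 ≤ 2l ≤ n and 0 ≤ i, j ≤ l, the Tasaki matrix entries satisfy the antidiagonal (palindromic) symmetry T(n, 2l, i, j) = T(n, 2l, l−i, l−j). -/

import Mathlib

/-- `ω m` is the volume of the `m`-dimensional unit euclidean ball: `π^(m/2)/Γ(m/2+1)`. -/
noncomputable def ω (m : ℕ) : ℝ :=
  Real.pi ^ ((m : ℝ) / 2) / Real.Gamma ((m : ℝ) / 2 + 1)

/-- The `(i,j)` entry of the Tasaki matrix `T^n_k`:
`T(n,k,i,j) = (-1)^(i+j) ⬝ (ω_k ω_{2n-k} / πⁿ) ⬝ ∑_{r = max(i,j)}^{⌊k/2⌋} [⋯]`.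
All inner subtractions are natural-number subtractions, which agree with the integer
values in the intended range `k ≤ n`, `i, j ≤ ⌊k/2⌋`; the truncation `(2r-2i-1)‼` for
`i = r` gives `0‼ = 1`, matching the convention `(-1)‼ = 1`. -/
noncomputable def T (n k i j : ℕ) : ℝ :=
  (-1 : ℝ) ^ (i + j) * (ω k * ω (2 * n - k) / Real.pi ^ n) *
    ∑ r ∈ Finset.Icc (max i j) (k / 2),
      (1 / (n.choose (2 * r) : ℝ)) *
        (((2 * n - 2 * r - k).factorial * (n - r).factorial * (k - 2 * i).factorial *
            (k - 2 * j).factorial : ℕ) : ℝ) /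
        ((8 ^ r * (k - 2 * r).factorial * (2 * n - 4 * r).factorial *
            (2 * r - 2 * i).factorial * (2 * r - 2 * j).factorial : ℕ) : ℝ) *
        ((Nat.doubleFactorial (2 * n - 2 * r + 1) * Nat.doubleFactorial (2 * n - 4 * r + 1) *
            Nat.doubleFactorial (2 * r - 2 * i - 1) *
            Nat.doubleFactorial (2 * r - 2 * j - 1) : ℕ) : ℝ) /
        ((Nat.doubleFactorial (2 * n - 2 * r - 2 * i + 1) *
            Nat.doubleFactorial (2 * n - 2 * r - 2 * j + 1) : ℕ) : ℝ)

/-- reciprocal Gamma -/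
noncomputable def gG (s : ℝ) : ℝ := (Real.Gamma s)⁻¹

lemma gG_rec (s : ℝ) : gG s = s * gG (s + 1) := by
  unfold gG
  by_cases h : s = 0
  · subst h; simp [Real.Gamma_zero]
  · rw [Real.Gamma_add_one h, mul_inv]; field_simp

/-- the vectors -/
noncomputable def vV (n l : ℕ) (r : ℝ) (i : ℕ) : ℝ :=
  (-1) ^ i * ((2 * l - 2 * i).factorial : ℝ) * 4 ^ i * gG (r - i + 1) * gG (n - r - i + 3 / 2)

noncomputable def yY (n : ℕ) (x : ℝ) : ℝ := x * (n + 1 / 2 - x)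

noncomputable def kK (l i : ℕ) : ℝ := ((l : ℝ) - i) * (l - i - 1 / 2)

noncomputable def eE (i : ℕ) : ℝ := (i : ℝ) * (i - 1 / 2)

lemma fac_rec (l i : ℕ) (hi : i < l) : ((2 * l - 2 * i).factorial : ℝ) =
    (2 * l - 2 * i) * (2 * l - 2 * i - 1) * ((2 * l - 2 * (i + 1)).factorial : ℝ) := by
  obtain ⟨m, rfl⟩ := Nat.exists_eq_add_of_lt hi
  have h1 : 2 * (i + m + 1) - 2 * i = (2 * m + 1) + 1 := by omega
  have h2 : 2 * (i + m + 1) - 2 * (i + 1) = 2 * m := by omega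
  rw [h1, h2, Nat.factorial_succ, Nat.factorial_succ]
  push_cast; ring

lemma gG_neg (m : ℕ) : gG (-(m : ℝ)) = 0 := by
  unfold gG; rw [Real.Gamma_neg_nat_eq_zero]; simp

lemma vV_zero (n l r i : ℕ) (h : r < i) : vV n l r i = 0 := by
  obtain ⟨m, rfl⟩ := Nat.exists_eq_add_of_lt h
  unfold vV
  have : (r : ℝ) - ((r + m + 1 : ℕ) : ℝ) + 1 = -(m : ℝ) := by push_cast; ring
  rw [this, gG_neg]; ring

lemma vV_y (n l r i : ℕ) (hi : i ≤ l) (hr : r ≤ l) :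
    kK l i * vV n l r (i + 1) = (yY n i - yY n r) * vV n l r i := by
  rcases Nat.lt_or_ge i l with h | h
  · unfold vV kK yY
    rw [fac_rec l i h]
    have e1 := gG_rec ((r : ℝ) - ((i + 1 : ℕ) : ℝ) + 1)
    have e2 := gG_rec ((n : ℝ) - r - ((i + 1 : ℕ) : ℝ) + 3 / 2)
    rw [e1, e2]
    push_cast
    rw [show (r : ℝ) - (i + 1) + 1 + 1 = r - i + 1 by ring,
      show (n : ℝ) - r - (i + 1) + 3 / 2 + 1 = n - r - i + 3 / 2 by ring]
    ring
  · obtain rfl : i = l := le_antisymm hi h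
    have hk : kK i i = 0 := by unfold kK; ring
    rw [hk]
    rcases Nat.lt_or_ge r i with h' | h'
    · rw [vV_zero n i r i h']; ring
    · obtain rfl : r = i := le_antisymm hr h'
      ring

noncomputable def aA (n l : ℕ) (r : ℝ) : ℝ :=
  -(n - r + 3 / 2) * (n - r + 1) * (n - l - r + 1 / 2) * (n - l - r + 1)
    / ((n - 2 * r + 3 / 2) * (n - 2 * r + 1 / 2))

noncomputable def cC (n l : ℕ) (r : ℝ) : ℝ :=
  -(r + 1) * (r + 1 / 2) * (l - r) * (l - r - 1 / 2)
    / ((n - 2 * r - 1 / 2) * (n - 2 * r + 1 / 2))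

noncomputable def bB (n l : ℕ) (r : ℝ) : ℝ :=
  (-l * (n + 1 / 2 - l) * (r + 1) * (n - r + 3 / 2) - aA n l r * r * (r + 1)
    - cC n l r * (n - r + 1 / 2) * (n - r + 3 / 2)) / ((r + 1) * (n - r + 3 / 2))

lemma half_ne (z : ℤ) : (z : ℝ) + 1 / 2 ≠ 0 := by
  intro h
  have h2 : ((2 * z + 1 : ℤ) : ℝ) = 0 := by push_cast; linarith
  have := Int.cast_eq_zero.mp h2
  omega

lemma poly_id (n l r i : ℝ) (a b c : ℝ) (h1 : n - 2 * r + 3 / 2 ≠ 0) (h2 : n - 2 * r + 1 / 2 ≠ 0)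
    (h3 : n - 2 * r - 1 / 2 ≠ 0) (h4 : r + 1 ≠ 0) (h5 : n - r + 3 / 2 ≠ 0)
    (ha : a = -(n - r + 3 / 2) * (n - r + 1) * (n - l - r + 1 / 2) * (n - l - r + 1)
    / ((n - 2 * r + 3 / 2) * (n - 2 * r + 1 / 2)))
    (hc : c = -(r + 1) * (r + 1 / 2) * (l - r) * (l - r - 1 / 2)
    / ((n - 2 * r - 1 / 2) * (n - 2 * r + 1 / 2)))
    (hb : b = (-l * (n + 1 / 2 - l) * (r + 1) * (n - r + 3 / 2) - a * r * (r + 1)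
    - c * (n - r + 1 / 2) * (n - r + 3 / 2)) / ((r + 1) * (n - r + 3 / 2))) :
    a * ((r - i) * (r + 1 - i)) + b * ((r + 1 - i) * (n - r - i + 3 / 2))
      + c * ((n - r - i + 1 / 2) * (n - r - i + 3 / 2)) =
    -((l - i) * (n + 1 / 2 - (l - i))) * ((r + 1 - i) * (n - r - i + 3 / 2))
     - i * (i - 1 / 2) * ((l - i + 1) * (l - i + 1 / 2)) := by
  have hb' : b * ((r + 1) * (n - r + 3 / 2)) = -l * (n + 1 / 2 - l) * (r + 1) * (n - r + 3 / 2)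
    - a * r * (r + 1) - c * (n - r + 1 / 2) * (n - r + 3 / 2) := by
    rw [hb]; exact div_mul_cancel₀ _ (mul_ne_zero h4 h5)
  have ha' : a * ((n - 2 * r + 3 / 2) * (n - 2 * r + 1 / 2)) =
      -(n - r + 3 / 2) * (n - r + 1) * (n - l - r + 1 / 2) * (n - l - r + 1) := by
    rw [ha]; exact div_mul_cancel₀ _ (mul_ne_zero h1 h2)
  have hc' : c * ((n - 2 * r - 1 / 2) * (n - 2 * r + 1 / 2)) =
      -(r + 1) * (r + 1 / 2) * (l - r) * (l - r - 1 / 2) := by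
    rw [hc]; exact div_mul_cancel₀ _ (mul_ne_zero h3 h2)
  have hD : (r + 1) * (n - r + 3 / 2) *
      ((n - 2 * r + 3 / 2) * (n - 2 * r + 1 / 2) * (n - 2 * r - 1 / 2)) ≠ 0 :=
    mul_ne_zero (mul_ne_zero h4 h5) (mul_ne_zero (mul_ne_zero h1 h2) h3)
  apply mul_right_cancel₀ hD
  clear hb ha hc
  linear_combination ((n - 2 * r + 3 / 2) * (n - 2 * r + 1 / 2) * (n - 2 * r - 1 / 2))
      * ((r + 1 - i) * (n - r - i + 3 / 2)) * hb'
    + (n - 2 * r - 1 / 2) * ((r - i) * (r + 1 - i) * ((r + 1) * (n - r + 3 / 2))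
      - r * (r + 1) * ((r + 1 - i) * (n - r - i + 3 / 2))) * ha'
    + (n - 2 * r + 3 / 2) * ((n - r - i + 1 / 2) * (n - r - i + 3 / 2)
      * ((r + 1) * (n - r + 3 / 2))
      - (n - r + 1 / 2) * (n - r + 3 / 2) * ((r + 1 - i) * (n - r - i + 3 / 2))) * hc'

lemma vV_D (n l r i : ℕ) (hl : 2 * l ≤ n) (hi : i ≤ l) (hr : r ≤ l) :
    aA n l r * vV n l (r - 1) i + bB n l r * vV n l r i + cC n l r * vV n l (r + 1) i =
      -yY n ((l - i : ℕ) : ℝ) * vV n l r i + eE i * vV n l r (i - 1) := by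
  have hp := poly_id n l r i (aA n l r) (bB n l r) (cC n l r)
    (by have := half_ne (n - 2 * r + 1); push_cast at this; intro h; apply this; linarith)
    (by have := half_ne (n - 2 * r); push_cast at this; intro h; apply this; linarith)
    (by have := half_ne (n - 2 * r - 1); push_cast at this; intro h; apply this; linarith)
    (by positivity)
    (by have := half_ne (n - r + 1); push_cast at this; intro h; apply this; linarith)
    rfl rfl rfl
  have hV1 : eE i * vV n l r (i - 1) = - eE i * (((l:ℝ) - i + 1) * (l - i + 1 / 2)) *
     ((-1) ^ i * ((2 * l - 2 * i).factorial : ℝ) * 4 ^ i * gG (r + 1 - i + 1)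
        * gG (n - r - i + 3 / 2 + 1)) := by
    rcases i with _ | i
    · simp [eE]
    · unfold vV
      rw [show i + 1 - 1 = i by omega, fac_rec l i (by omega)]
      push_cast
      rw [show (r : ℝ) + 1 - (i + 1) + 1 = r - i + 1 by ring,
        show (n : ℝ) - r - (i + 1) + 3 / 2 + 1 = n - r - i + 3 / 2 by ring]
      ring
  rw [hV1, Nat.cast_sub hi]
  have e1 := gG_rec ((r : ℝ) - i)
  have e2 := gG_rec ((r : ℝ) - i + 1)
  have e3 := gG_rec ((n : ℝ) - r - i + 3 / 2)
  have e4 := gG_rec ((n : ℝ) - r - i + 1 / 2)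
  rw [show (n : ℝ) - r - i + 1 / 2 + 1 = n - r - i + 3 / 2 by ring] at e4
  unfold vV
  rw [show (r : ℝ) - 1 - i + 1 = r - i by ring, show (r : ℝ) + 1 - i + 1 = r - i + 1 + 1 by ring,
    show (n : ℝ) - (r - 1) - i + 3 / 2 = n - r - i + 3 / 2 + 1 by ring,
    show (n : ℝ) - (r + 1) - i + 3 / 2 = n - r - i + 1 / 2 by ring]
  rw [e4, e3, e1, e2]
  unfold yY eE
  linear_combination ((-1) ^ i * ((2 * l - 2 * i).factorial : ℝ) * 4 ^ i * gG (r - i + 1 + 1)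
        * gG (n - r - i + 3 / 2 + 1)) * hp

noncomputable def wW (n l r : ℕ) : ℝ :=
  (2 * n + 1 - 4 * r) * ((2 * r).factorial : ℝ) * ((2 * n - 2 * r - 2 * l).factorial : ℝ)
    * ((2 * n - 2 * r + 1).factorial : ℝ) / ((2 * l - 2 * r).factorial : ℝ)

lemma wW_rec (n l r : ℕ) (hl : 2 * l ≤ n) (hr : r < l) :
    wW n l (r + 1) * aA n l ((r + 1 : ℕ) : ℝ) = wW n l r * cC n l r := by
  have f1 := fac_rec l r hr
  have f2 := fac_rec (n - l) r (by omega)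
  obtain ⟨m, rfl⟩ : ∃ m, n = r + m + 1 := ⟨n - r - 1, by omega⟩
  have f3 : ((2 * (r + m + 1) - 2 * r + 1).factorial : ℝ) = (2 * m + 3) * (2 * m + 2) *
      ((2 * (r + m + 1) - 2 * (r + 1) + 1).factorial : ℝ) := by
    rw [show 2 * (r + m + 1) - 2 * r + 1 = 2 * m + 1 + 1 + 1 by omega,
      show 2 * (r + m + 1) - 2 * (r + 1) + 1 = 2 * m + 1 by omega,
      Nat.factorial_succ, Nat.factorial_succ]
    push_cast; ring
  have f4 : ((2 * (r + 1)).factorial : ℝ) = (2 * r + 2) * (2 * r + 1) * ((2 * r).factorial : ℝ) := by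
    rw [show 2 * (r + 1) = 2 * r + 1 + 1 by ring, Nat.factorial_succ, Nat.factorial_succ]
    push_cast; ring
  rw [show 2 * (r + m + 1 - l) - 2 * r = 2 * (r + m + 1) - 2 * r - 2 * l by omega,
    show 2 * (r + m + 1 - l) - 2 * (r + 1) = 2 * (r + m + 1) - 2 * (r + 1) - 2 * l by omega,
    Nat.cast_sub (by omega)] at f2
  unfold wW aA cC
  rw [f1, f2, f3, f4]
  have p1 : ((2 * l - 2 * (r + 1)).factorial : ℝ) ≠ 0 := by positivity
  have q1 : ((r + m + 1 : ℕ) : ℝ) - 2 * r - 1 / 2 ≠ 0 := by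
    have := half_ne ((r + m + 1 : ℕ) - 2 * r - 1); push_cast at this ⊢
    intro h; apply this; linarith
  have q2 : ((r + m + 1 : ℕ) : ℝ) - 2 * r + 1 / 2 ≠ 0 := by
    have := half_ne ((r + m + 1 : ℕ) - 2 * r); push_cast at this ⊢
    intro h; apply this; linarith
  have q3 : ((r + m + 1 : ℕ) : ℝ) - 2 * r - 3 / 2 ≠ 0 := by
    have := half_ne ((r + m + 1 : ℕ) - 2 * r - 2); push_cast at this ⊢
    intro h; apply this; linarith
  have q4 : (2 * (l : ℝ) - 2 * r) ≠ 0 := by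
    have : (r : ℝ) < l := by exact_mod_cast hr
    intro h; linarith
  have q5 : (2 * (l : ℝ) - 2 * r - 1) ≠ 0 := by
    have := half_ne ((l : ℤ) - r - 1); push_cast at this ⊢
    intro h; apply this; linarith
  generalize ((2 * l - 2 * (r + 1)).factorial : ℝ) = F1 at *
  generalize ((2 * (r + m + 1) - 2 * (r + 1) - 2 * l).factorial : ℝ) = F2 at *
  generalize ((2 * (r + m + 1) - 2 * (r + 1) + 1).factorial : ℝ) = F3 at *
  generalize ((2 * r).factorial : ℝ) = F4 at *
  have hm : (m : ℝ) = ((r + m + 1 : ℕ) : ℝ) - r - 1 := by push_cast; ring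
  rw [hm]
  generalize ((r + m + 1 : ℕ) : ℝ) = N at *
  push_cast
  rw [show N - 2 * ((r : ℝ) + 1) + 3 / 2 = N - 2 * r - 1 / 2 by ring,
    show N - 2 * ((r : ℝ) + 1) + 1 / 2 = N - 2 * r - 3 / 2 by ring,
    show 2 * N + 1 - 4 * ((r : ℝ) + 1) = 2 * (N - 2 * r - 3 / 2) by ring,
    show 2 * N + 1 - 4 * (r : ℝ) = 2 * (N - 2 * r + 1 / 2) by ring]
  rw [div_mul_div_comm, div_mul_div_comm, div_eq_div_iff (by positivity) (by positivity)]
  ring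

noncomputable def sS (n l i j : ℕ) : ℝ :=
  ∑ r ∈ Finset.range (l + 1), wW n l r * vV n l r i * vV n l r j

lemma sS_symm (n l i j : ℕ) : sS n l i j = sS n l j i := by
  unfold sS; apply Finset.sum_congr rfl; intros; ring

lemma sS_y (n l i j : ℕ) (hi : i ≤ l) (hj : j ≤ l) :
    (yY n i - yY n j) * sS n l i j = kK l i * sS n l (i + 1) j - kK l j * sS n l i (j + 1) := by
  unfold sS
  rw [Finset.mul_sum, Finset.mul_sum, Finset.mul_sum, ← Finset.sum_sub_distrib]
  apply Finset.sum_congr rfl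
  intro r hr
  have hr' : r ≤ l := by simpa [Nat.lt_succ_iff] using hr
  have h1 := vV_y n l r i hi hr'
  have h2 := vV_y n l r j hj hr'
  linear_combination -wW n l r * vV n l r j * h1 + wW n l r * vV n l r i * h2

lemma sS_D (n l i j : ℕ) (hl : 2 * l ≤ n) (hi : i ≤ l) (hj : j ≤ l) :
    (yY n ((l - i : ℕ) : ℝ) - yY n ((l - j : ℕ) : ℝ)) * sS n l i j =
      eE i * sS n l (i - 1) j - eE j * sS n l i (j - 1) := by
  let X : ℕ → ℝ := fun r => wW n l r * aA n l r *
    (vV n l ((r : ℝ) - 1) i * vV n l r j - vV n l r i * vV n l ((r : ℝ) - 1) j)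
  let Y : ℕ → ℝ := fun r => wW n l r * cC n l r *
    (vV n l r i * vV n l ((r : ℝ) + 1) j - vV n l ((r : ℝ) + 1) i * vV n l r j)
  have hX0 : X 0 = 0 := by
    have h : ∀ i, vV n l (((0 : ℕ) : ℝ) - 1) i = 0 := by
      intro i; unfold vV
      rw [show ((0 : ℕ) : ℝ) - 1 - i + 1 = -(i : ℝ) by push_cast; ring, gG_neg]; ring
    simp only [X, h]; ring
  have hYl : Y l = 0 := by
    have : cC n l l = 0 := by unfold cC; simp
    simp only [Y, this]; ring
  have hXY : ∀ r < l, Y r = X (r + 1) := by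
    intro r hr
    simp only [X, Y]
    rw [wW_rec n l r hl hr]
    push_cast
    rw [show (r : ℝ) + 1 - 1 = r by ring]
  have hsum : ∑ r ∈ Finset.range (l + 1), (X r - Y r) = 0 := by
    rw [Finset.sum_sub_distrib, Finset.sum_range_succ', hX0, Finset.sum_range_succ, hYl,
      Finset.sum_congr rfl (fun r hr => hXY r (Finset.mem_range.mp hr))]
    ring
  rw [← sub_eq_zero, ← neg_eq_zero, ← hsum]
  unfold sS
  rw [Finset.mul_sum, Finset.mul_sum, Finset.mul_sum, ← Finset.sum_sub_distrib,
    ← Finset.sum_sub_distrib, ← Finset.sum_neg_distrib]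
  apply Finset.sum_congr rfl
  intro r hr
  have hr' : r ≤ l := by simpa [Nat.lt_succ_iff] using hr
  have h1 := vV_D n l r i hl hi hr'
  have h2 := vV_D n l r j hl hj hr'
  simp only [X, Y]
  linear_combination -wW n l r * vV n l r j * h1 + wW n l r * vV n l r i * h2

lemma kK_refl (l i : ℕ) (hi : i ≤ l) : kK l (l - i) = eE i := by
  unfold kK eE; rw [Nat.cast_sub hi]; ring

lemma eE_ne (i : ℕ) : eE (i + 1) ≠ 0 := by
  unfold eE
  have : (0 : ℝ) ≤ i := by positivity
  apply ne_of_gt; push_cast; apply mul_pos <;> linarith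

lemma sS_bdry (n l : ℕ) (hl : 2 * l ≤ n) (d : ℕ) (hd : d ≤ l) :
    sS n l (l - d) 0 = sS n l d l := by
  induction d with
  | zero => simpa using sS_symm n l l 0
  | succ d ih =>
    have ih := ih (by omega)
    have h1 := sS_D n l (l - d) 0 hl (by omega) (by omega)
    have h2 := sS_y n l d l (by omega) le_rfl
    have hk : kK l l = 0 := by unfold kK; ring
    have he : eE 0 = 0 := by simp [eE]
    have hk2 := kK_refl l (l - d) (by omega)
    obtain ⟨m, hm⟩ : ∃ m, l - d = m + 1 := ⟨l - d - 1, by omega⟩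
    rw [show l - (l - d) = d by omega] at h1 hk2
    rw [hk, hk2] at h2
    rw [he, ih] at h1
    rw [show l - (d + 1) = l - d - 1 by omega]
    have hne : eE (l - d) ≠ 0 := by rw [hm]; exact eE_ne m
    apply mul_left_cancel₀ hne
    simp only [Nat.sub_zero] at h1
    linarith

lemma sS_main (n l : ℕ) (hl : 2 * l ≤ n) (j : ℕ) (hj : j ≤ l) :
    ∀ i ≤ l, sS n l i j = sS n l (l - i) (l - j) := by
  induction j with
  | zero =>
    intro i hi
    have := sS_bdry n l hl (l - i) (by omega)
    rw [show l - (l - i) = i by omega] at this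
    simpa using this
  | succ j ih =>
    intro i hi
    have ih := ih (by omega)
    have h1 := sS_y n l i j hi (by omega)
    have h2 := sS_D n l (l - i) (l - j) hl (by omega) (by omega)
    rw [← kK_refl l (l - i) (by omega), ← kK_refl l (l - j) (by omega),
      show l - (l - i) = i by omega, show l - (l - j) = j by omega, ← ih i hi] at h2
    have h3 : kK l i * sS n l (i + 1) j = kK l i * sS n l (l - i - 1) (l - j) := by
      rcases Nat.lt_or_ge i l with h | h
      · rw [ih (i + 1) (by omega), show l - (i + 1) = l - i - 1 by omega]
      · obtain rfl : i = l := le_antisymm hi h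
        have hk : kK i i = 0 := by unfold kK; ring
        rw [hk]; ring
    have hne : kK l j ≠ 0 := by
      have := kK_refl l (l - j) (by omega)
      rw [show l - (l - j) = j by omega] at this
      obtain ⟨m, hm⟩ : ∃ m, l - j = m + 1 := ⟨l - j - 1, by omega⟩
      rw [this, hm]; exact eE_ne m
    apply mul_left_cancel₀ hne
    rw [show l - (j + 1) = l - j - 1 by omega]
    linarith

lemma dfA (m : ℕ) : (Nat.doubleFactorial (2 * m - 1) : ℝ) / ((2 * m).factorial : ℝ) =
    gG ((m : ℝ) + 1) / 2 ^ m := by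
  have h : ((2 * m).factorial : ℝ) = Nat.doubleFactorial (2 * m - 1) * (2 ^ m * m.factorial) := by
    rcases m with _ | m
    · simp
    · have := Nat.factorial_eq_mul_doubleFactorial (2 * m + 1)
      rw [show 2 * m + 1 + 1 = 2 * (m + 1) by ring, Nat.doubleFactorial_two_mul] at this
      rw [this, show 2 * (m + 1) - 1 = 2 * m + 1 by omega]
      push_cast; ring
  have h1 : (Nat.doubleFactorial (2 * m - 1) : ℝ) ≠ 0 := by
    exact_mod_cast (Nat.doubleFactorial_pos _).ne'
  have h2 : (m.factorial : ℝ) ≠ 0 := by positivity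
  unfold gG
  rw [h, Real.Gamma_nat_eq_factorial]
  field_simp

lemma dfB (m : ℕ) : 1 / (Nat.doubleFactorial (2 * m + 1) : ℝ) =
    √Real.pi * gG ((m : ℝ) + 3 / 2) / 2 ^ (m + 1) := by
  have h := Real.Gamma_nat_add_half (m + 1)
  have h1 : (Nat.doubleFactorial (2 * m + 1) : ℝ) ≠ 0 := by
    exact_mod_cast (Nat.doubleFactorial_pos _).ne'
  have h2 : √Real.pi ≠ 0 := by have := Real.pi_pos; positivity
  rw [show 2 * (m + 1) - 1 = 2 * m + 1 by omega] at h
  unfold gG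
  rw [show (m : ℝ) + 3 / 2 = ((m + 1 : ℕ) : ℝ) + 1 / 2 by push_cast; ring, h]
  field_simp

lemma vconv (n l r i : ℕ) (hl : 2 * l ≤ n) (hi : i ≤ r) (hr : r ≤ l) :
    (-1) ^ i * ((2 * l - 2 * i).factorial : ℝ) * ((Nat.doubleFactorial (2 * r - 2 * i - 1) : ℝ) /
      ((2 * r - 2 * i).factorial : ℝ)) *
      (1 / (Nat.doubleFactorial (2 * n - 2 * r - 2 * i + 1) : ℝ)) =
    √Real.pi / 2 ^ (n + 1) * vV n l r i := by
  obtain ⟨a, rfl⟩ : ∃ a, r = i + a := ⟨r - i, by omega⟩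
  obtain ⟨b, rfl⟩ : ∃ b, n = i + a + i + b := ⟨n - (i + a) - i, by omega⟩
  rw [show 2 * (i + a) - 2 * i = 2 * a by omega,
    show 2 * (i + a + i + b) - 2 * (i + a) - 2 * i + 1 = 2 * b + 1 by omega, dfA, dfB]
  unfold vV
  rw [show ((i + a : ℕ) : ℝ) - i + 1 = (a : ℝ) + 1 by push_cast; ring,
    show ((i + a + i + b : ℕ) : ℝ) - ((i + a : ℕ) : ℝ) - i + 3 / 2 = (b : ℝ) + 3 / 2 by
      push_cast; ring]
  rw [show (4 : ℝ) ^ i = 2 ^ i * 2 ^ i by rw [← mul_pow]; norm_num]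
  rw [show (2 : ℝ) ^ (i + a + i + b + 1) = 2 ^ i * 2 ^ i * 2 ^ a * 2 ^ (b + 1) by ring]
  field_simp

lemma wconv (n l r : ℕ) (hl : 2 * l ≤ n) (hr : r ≤ l) :
    (1 / (n.choose (2 * r) : ℝ)) * (((2 * n - 2 * r - 2 * l).factorial : ℝ) * (n - r).factorial) /
      (8 ^ r * (2 * l - 2 * r).factorial * (2 * n - 4 * r).factorial) *
      (Nat.doubleFactorial (2 * n - 2 * r + 1) * Nat.doubleFactorial (2 * n - 4 * r + 1)) =
    1 / (n.factorial * 4 ^ n) * wW n l r := by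
  obtain ⟨m, rfl⟩ : ∃ m, n = m + 2 * r := ⟨n - 2 * r, by omega⟩
  unfold wW
  rw [show m + 2 * r - r = m + r by omega,
    show 2 * (m + 2 * r) - 2 * r + 1 = 2 * (m + r) + 1 by omega,
    show 2 * (m + 2 * r) - 4 * r = 2 * m by omega]
  have h1 : ((m + 2 * r).choose (2 * r) : ℝ) * m.factorial * (2 * r).factorial
      = (m + 2 * r).factorial := by
    have := Nat.choose_mul_factorial_mul_factorial (n := m + 2 * r) (k := 2 * r) (by omega)
    rw [show m + 2 * r - 2 * r = m by omega] at this
    rw [← this]; push_cast; ring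
  have h2 : ∀ k : ℕ, ((2 * k + 1).factorial : ℝ) =
      (Nat.doubleFactorial (2 * k + 1) : ℝ) * (2 ^ k * k.factorial) := by
    intro k
    rw [Nat.factorial_eq_mul_doubleFactorial, Nat.doubleFactorial_two_mul]; push_cast; ring
  have h3 : (2 * (m : ℝ) + 1) * ((2 * m).factorial : ℝ) =
      (Nat.doubleFactorial (2 * m + 1) : ℝ) * (2 ^ m * m.factorial) := by
    rw [← h2, Nat.factorial_succ]; push_cast; ring
  have h4 : (Nat.doubleFactorial (2 * m + 1) : ℝ) =
      (2 * (m : ℝ) + 1) * ((2 * m).factorial : ℝ) / (2 ^ m * m.factorial) := by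
    rw [h3]; field_simp
  rw [h2 (m + r), h4, ← h1]
  have c0 : ((m + 2 * r).choose (2 * r) : ℝ) ≠ 0 := by
    have := Nat.choose_pos (n := m + 2 * r) (k := 2 * r) (by omega)
    positivity
  rw [show (4 : ℝ) ^ (m + 2 * r) = 2 ^ m * 2 ^ (m + r) * 8 ^ r by
    rw [show (8 : ℝ) = 2 ^ 3 by norm_num, show (4 : ℝ) = 2 ^ 2 by norm_num, ← pow_mul, ← pow_mul]
    ring]
  push_cast
  field_simp
  ring

lemma T_eq (n l i j : ℕ) (hl : 2 * l ≤ n) :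
    T n (2 * l) i j = (ω (2 * l) * ω (2 * n - 2 * l) / Real.pi ^ n) *
      (1 / (n.factorial * 4 ^ n) * (√Real.pi / 2 ^ (n + 1)) ^ 2) * sS n l i j := by
  have hs : sS n l i j = ∑ r ∈ Finset.Icc (max i j) l, wW n l r * vV n l r i * vV n l r j := by
    unfold sS
    symm
    apply Finset.sum_subset
    · intro r hr
      simp only [Finset.mem_Icc, Finset.mem_range] at *
      omega
    · intro r h1 h2
      simp only [Finset.mem_Icc, Finset.mem_range, max_le_iff, not_and_or] at *
      have : r < i ∨ r < j := by omega
      rcases this with h | h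
      · rw [vV_zero n l r i h]; ring
      · rw [vV_zero n l r j h]; ring
  rw [hs]
  unfold T
  rw [show 2 * l / 2 = l by omega, mul_comm ((-1 : ℝ) ^ (i + j)), mul_assoc, mul_assoc]
  congr 1
  rw [Finset.mul_sum, Finset.mul_sum]
  apply Finset.sum_congr rfl
  intro r hr
  simp only [Finset.mem_Icc, max_le_iff] at hr
  have hw := wconv n l r hl hr.2
  have h1 := vconv n l r i hl hr.1.1 hr.2
  have h2 := vconv n l r j hl hr.1.2 hr.2
  have key : 1 / (n.factorial * 4 ^ n) * (√Real.pi / 2 ^ (n + 1)) ^ 2 *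
      (wW n l r * vV n l r i * vV n l r j) = (1 / (n.factorial * 4 ^ n) * wW n l r) *
      (√Real.pi / 2 ^ (n + 1) * vV n l r i) * (√Real.pi / 2 ^ (n + 1) * vV n l r j) := by ring
  rw [key, ← hw, ← h1, ← h2, pow_add]
  push_cast
  simp only [div_eq_mul_inv, mul_inv]
  ring

theorem stmt16 (n l i j : ℕ) (hl : 2 * l ≤ n) (hi : i ≤ l) (hj : j ≤ l) :
    T n (2 * l) i j = T n (2 * l) (l - i) (l - j) := by
  rw [T_eq n l i j hl, T_eq n l (l - i) (l - j) hl, sS_main n l hl j hj i hi]
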